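/- arXiv:0910.1737 — 2 statements merged into one kernel-verified Lean document; each statement's English description precedes it below -/
import Mathlib

section
/- Let U be a vector of linear functionals. Then U is quasi-definite if and only if there exist a sequence of N×N matrix polynomials G_m(z) = Σ_{j=0}^m β_j^m z^j with each β_m^m a nonsingular upper triangular matrix, and a sequence {Θ_m}_{m∈ℕ} of nonsingular lower triangular matrices, such that (G_m(h(x))ᵀU)(P_j) = Θ_m·δ_{j,m} for all 0 ≤ j ≤ m and all m ∈ ℕ. Moreover, in that case the coefficients of G_m are determined by the block linear system D_m·(β_0^m; β_1^m; …; β_m^m) = (0; …; 0; Θ_m), i.e. the stacked (m+1)N × N block column of coefficients equals D_m^{−1} times the block column whose only nonzero block is Θ_m in the last position. -/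
open Polynomial Matrix Finset

noncomputable section

abbrev Mat (N : ℕ) := Matrix (Fin N) (Fin N) ℝ

/-- A vector of linear functionals `U = (u^1, …, u^N)ᵀ`. -/
abbrev VecFun (N : ℕ) := Fin N → (Polynomial ℝ →ₗ[ℝ] ℝ)

/-- The matrix `(qU)(P)`: its `(i,j)` entry is `u^j (q * P i)`. -/
def matUq {N : ℕ} (U : VecFun N) (q : Polynomial ℝ) (P : Fin N → Polynomial ℝ) : Mat N :=
  Matrix.of fun i j => U j (q * P i)

/-- The matrix `U(P)`: its `(i,j)` entry is `u^j (P i)`. -/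
def matVF {N : ℕ} (U : VecFun N) (P : Fin N → Polynomial ℝ) : Mat N :=
  Matrix.of fun i j => U j (P i)

/-- `P_0(x) = (1, x, …, x^{N-1})ᵀ`. -/
def P0v (N : ℕ) : Fin N → Polynomial ℝ := fun i => X ^ (i : ℕ)

/-- `P_j(x) = h(x)^j • P_0(x)`. -/
def Pvec (N : ℕ) (h : Polynomial ℝ) (j : ℕ) : Fin N → Polynomial ℝ := fun i => h ^ j * X ^ (i : ℕ)

/-- The `n`-th moment `𝒰_n = U(P_n)`. -/
def Umom (N : ℕ) (U : VecFun N) (h : Polynomial ℝ) (n : ℕ) : Mat N := matUq U (h ^ n) (P0v N)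

def UpperTri {N : ℕ} {R : Type*} [Zero R] (A : Matrix (Fin N) (Fin N) R) : Prop :=
  ∀ i j : Fin N, (j : ℕ) < (i : ℕ) → A i j = 0

def LowerTri {N : ℕ} {R : Type*} [Zero R] (A : Matrix (Fin N) (Fin N) R) : Prop :=
  ∀ i j : Fin N, (i : ℕ) < (j : ℕ) → A i j = 0

/-- Quasi-definiteness: every leading principal submatrix (of any size `n`) of the block
Hankel moment matrices `D_m = (𝒰_{i+j})` is nonsingular.  The `n × n` leading principal
submatrix has `(a,b)` entry `u^{b % N} (h^{a/N + b/N} * x^{a % N})`. -/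
def QuasiDef (N : ℕ) (hN : 0 < N) (U : VecFun N) (h : Polynomial ℝ) : Prop :=
  ∀ n : ℕ, IsUnit (Matrix.det (Matrix.of fun a b : Fin n =>
    U ⟨(b : ℕ) % N, Nat.mod_lt _ hN⟩ (h ^ ((a : ℕ) / N + (b : ℕ) / N) * X ^ ((a : ℕ) % N))))

lemma UpperTri.isUnit_det_iff {n : ℕ} {A : Mat n} (hA : UpperTri A) :
    IsUnit A.det ↔ ∀ i, A i i ≠ 0 := by
  have ht : A.BlockTriangular id := fun i j hij => hA i j hij
  rw [det_of_isUpperTriangular ht, isUnit_iff_ne_zero, Finset.prod_ne_zero_iff]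
  simp

lemma LowerTri.isUnit_det_iff {n : ℕ} {A : Mat n} (hA : LowerTri A) :
    IsUnit A.det ↔ ∀ i, A i i ≠ 0 := by
  have ht : A.BlockTriangular OrderDual.toDual := fun i j hij => hA i j hij
  rw [det_of_isLowerTriangular A ht, isUnit_iff_ne_zero, Finset.prod_ne_zero_iff]
  simp

/-- The `n × n` leading principal submatrix of an infinite matrix. -/
def leadingSubmatrix (M : ℕ → ℕ → ℝ) (n : ℕ) : Mat n := Matrix.of fun a b => M a b

/-- If all leading principal minors of `M` are nonzero, then `M * B` is lower triangular for some
upper triangular `B`, both with nonzero diagonals. -/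
lemma exists_upper_of_leading_minors {M : ℕ → ℕ → ℝ}
    (hM : ∀ n, IsUnit (leadingSubmatrix M n).det) :
    ∃ B : ℕ → ℕ → ℝ, (∀ b n, n < b → B b n = 0) ∧ (∀ n, B n n ≠ 0) ∧
      (∀ n a, a < n → ∑ b ∈ range (n + 1), M a b * B b n = 0) ∧
      (∀ n, ∑ b ∈ range (n + 1), M n b * B b n ≠ 0) := by
  have hsolve : ∀ n, ∃ v : ℕ → ℝ, (∀ b, n < b → v b = 0) ∧ v n ≠ 0 ∧
      (∀ a < n, ∑ b ∈ range (n + 1), M a b * v b = 0) ∧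
      ∑ b ∈ range (n + 1), M n b * v b ≠ 0 := by
    intro n
    obtain ⟨w, hw⟩ := (mulVec_surjective_iff_isUnit.2
      ((isUnit_iff_isUnit_det _).2 (hM (n + 1)))) (Pi.single (Fin.last n) 1)
    set v : ℕ → ℝ := fun b => if hb : b < n + 1 then w ⟨b, hb⟩ else 0 with hv
    have hrow : ∀ a : Fin (n + 1), ∑ b ∈ range (n + 1), M a b * v b =
        (Pi.single (Fin.last n) 1 : Fin (n + 1) → ℝ) a := by
      intro a
      rw [← hw, Finset.sum_range]
      refine Finset.sum_congr rfl fun b _ => ?_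
      simp only [leadingSubmatrix, of_apply, hv, dif_pos b.2, Fin.eta]
    have hzero : ∀ a < n, ∑ b ∈ range (n + 1), M a b * v b = 0 := by
      intro a ha
      have := hrow ⟨a, by omega⟩
      rwa [Pi.single_eq_of_ne (by simp [Fin.ext_iff]; omega)] at this
    have hone : ∑ b ∈ range (n + 1), M n b * v b = 1 := by
      simpa using hrow (Fin.last n)
    refine ⟨v, fun b hb => ?_, fun hvn => ?_, hzero, by simp [hone]⟩
    · simp [hv]; omega
    · have hker : leadingSubmatrix M n *ᵥ (fun b => v b) = 0 := by
        ext a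
        have := hzero a a.2
        rw [Finset.sum_range_succ, hvn, mul_zero, add_zero, Finset.sum_range] at this
        simpa [mulVec, dotProduct, leadingSubmatrix] using this
      have hv0 := eq_zero_of_mulVec_eq_zero (hM n).ne_zero hker
      rw [Finset.sum_range_succ, hvn, Finset.sum_range] at hone
      simp [fun b : Fin n => show v b = 0 from congrFun hv0 b] at hone
  choose v hv using hsolve
  exact ⟨fun b n => v n b, fun b n => (hv n).1 b, fun n => (hv n).2.1,
    fun n => (hv n).2.2.1, fun n => (hv n).2.2.2⟩

lemma sum_range_eq_of_upper {M B : ℕ → ℕ → ℝ} (hB : ∀ b n, n < b → B b n = 0)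
    {n K : ℕ} (hK : n < K) (a : ℕ) :
    ∑ b ∈ range K, M a b * B b n = ∑ b ∈ range (n + 1), M a b * B b n := by
  refine (Finset.sum_subset (range_subset_range.2 hK) fun b _ hb => ?_).symm
  rw [hB b n (by simpa using hb), mul_zero]

/-- If `M * B` is lower triangular for an upper triangular `B`, both with nonzero diagonals,
then all leading principal minors of `M` are nonzero. -/
lemma leading_minors_of_exists_upper {M B : ℕ → ℕ → ℝ}
    (hB : ∀ b n, n < b → B b n = 0)
    (hzero : ∀ n a, a < n → ∑ b ∈ range (n + 1), M a b * B b n = 0)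
    (hne : ∀ n, ∑ b ∈ range (n + 1), M n b * B b n ≠ 0) (n : ℕ) :
    IsUnit (leadingSubmatrix M n).det := by
  have hentry : ∀ a c : Fin n, (leadingSubmatrix M n * leadingSubmatrix B n) a c =
      ∑ b ∈ range (c + 1), M a b * B b c := by
    intro a c
    rw [mul_apply]
    simp only [leadingSubmatrix, of_apply]
    rw [← Finset.sum_range (fun b => M a b * B b c), sum_range_eq_of_upper hB c.2]
  have hlow : LowerTri (leadingSubmatrix M n * leadingSubmatrix B n) :=
    fun a c hac => (hentry a c).trans (hzero c a hac)
  have hdet := hlow.isUnit_det_iff.2 fun a => hentry a a ▸ hne a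
  rw [det_mul] at hdet
  exact isUnit_of_mul_isUnit_left hdet

lemma sum_range_mul_eq_sum_range_sum_fin (f : ℕ → ℝ) (K N : ℕ) :
    ∑ b ∈ range (K * N), f b = ∑ k ∈ range K, ∑ l : Fin N, f (k * N + l) := by
  induction K with
  | zero => simp
  | succ K ih =>
    rw [Nat.succ_mul, Finset.sum_range_add, ih, Finset.sum_range_succ,
      Finset.sum_range (fun l => f (K * N + l))]

/-- The infinite moment matrix whose leading principal submatrices define quasi-definiteness. -/
def momentMatrix {N : ℕ} (hN : 0 < N) (U : VecFun N) (h : Polynomial ℝ) (a b : ℕ) : ℝ :=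
  U ⟨b % N, Nat.mod_lt _ hN⟩ (h ^ (a / N + b / N) * X ^ (a % N))

lemma quasiDef_iff {N : ℕ} (hN : 0 < N) (U : VecFun N) (h : Polynomial ℝ) :
    QuasiDef N hN U h ↔ ∀ n, IsUnit (leadingSubmatrix (momentMatrix hN U h) n).det :=
  Iff.rfl

lemma mul_add_fin_div {N : ℕ} (k : ℕ) (l : Fin N) : (k * N + l) / N = k := by
  rw [Nat.mul_comm, Nat.mul_add_div l.pos, Nat.div_eq_of_lt l.2, add_zero]

lemma mul_add_fin_mod {N : ℕ} (k : ℕ) (l : Fin N) : (k * N + l) % N = l := by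
  rw [Nat.mul_comm, Nat.mul_add_mod, Nat.mod_eq_of_lt l.2]

lemma sum_matUq_mul_apply {N : ℕ} (hN : 0 < N) (U : VecFun N) (h : Polynomial ℝ)
    (γ : ℕ → Mat N) (K j : ℕ) (i c : Fin N) :
    (∑ k ∈ range K, matUq U (h ^ k) (Pvec N h j) * γ k) i c =
      ∑ b ∈ range (K * N), momentMatrix hN U h (j * N + i) b *
        γ (b / N) ⟨b % N, Nat.mod_lt _ hN⟩ c := by
  rw [sum_range_mul_eq_sum_range_sum_fin, Matrix.sum_apply]
  refine Finset.sum_congr rfl fun k _ => ?_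
  rw [mul_apply]
  refine Finset.sum_congr rfl fun l _ => ?_
  simp only [momentMatrix, mul_add_fin_div, mul_add_fin_mod, Fin.eta, matUq, Pvec, of_apply]
  rw [← mul_assoc, ← pow_add, add_comm k j]

lemma matUq_Pvec {N : ℕ} (U : VecFun N) (h : Polynomial ℝ) (k j : ℕ) :
    matUq U (h ^ k) (Pvec N h j) = Umom N U h (j + k) := by
  ext i l
  simp only [Umom, matUq, Pvec, P0v, of_apply]
  rw [← mul_assoc, ← pow_add, add_comm k j]

lemma mul_add_fin_lt {N m : ℕ} (c : Fin N) : m * N + c < (m + 1) * N := by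
  rw [Nat.succ_mul]; omega

lemma mul_add_fin_lt_of_lt {N j m : ℕ} (hjm : j < m) (i c : Fin N) :
    j * N + i < m * N + c :=
  (mul_add_fin_lt i).trans_le ((Nat.mul_le_mul_right N hjm).trans (Nat.le_add_right _ _))

lemma exists_orthogonal_of_quasiDef {N : ℕ} (hN : 0 < N) {U : VecFun N} {h : Polynomial ℝ}
    (hU : QuasiDef N hN U h) :
    ∃ (β : ℕ → ℕ → Mat N) (Θ : ℕ → Mat N),
      (∀ m, UpperTri (β m m) ∧ IsUnit (β m m).det) ∧
      (∀ m, LowerTri (Θ m) ∧ IsUnit (Θ m).det) ∧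
      (∀ m j, j ≤ m →
        (∑ k ∈ Finset.range (m + 1), matUq U (h ^ k) (Pvec N h j) * β m k)
          = if j = m then Θ m else 0) := by
  obtain ⟨B, hB, hBne, hzero, hne⟩ := exists_upper_of_leading_minors ((quasiDef_iff hN U h).1 hU)
  set β : ℕ → ℕ → Mat N := fun m k => Matrix.of fun l c => B (k * N + l) (m * N + c) with hβ
  have hentry : ∀ m j (i c : Fin N),
      (∑ k ∈ range (m + 1), matUq U (h ^ k) (Pvec N h j) * β m k) i c =
        ∑ b ∈ range (m * N + c + 1), momentMatrix hN U h (j * N + i) b * B b (m * N + c) := by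
    intro m j i c
    rw [sum_matUq_mul_apply hN, ← sum_range_eq_of_upper hB (mul_add_fin_lt c)]
    simp only [hβ, of_apply, Nat.div_add_mod']
  refine ⟨β, fun m => ∑ k ∈ range (m + 1), matUq U (h ^ k) (Pvec N h m) * β m k,
    fun m => ?_, fun m => ?_, fun m j hj => ?_⟩
  · have hup : UpperTri (β m m) := fun i c hic => hB _ _ (by omega)
    exact ⟨hup, hup.isUnit_det_iff.2 fun i => hBne _⟩
  · have hlow : LowerTri (∑ k ∈ range (m + 1), matUq U (h ^ k) (Pvec N h m) * β m k) :=
      fun i c hic => (hentry m m i c).trans (hzero _ _ (by omega))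
    exact ⟨hlow, hlow.isUnit_det_iff.2 fun i => (hentry m m i i).trans_ne (hne _)⟩
  · split_ifs with hjm
    · rw [hjm]
    · ext i c
      exact (hentry m j i c).trans
        (hzero _ _ (mul_add_fin_lt_of_lt (lt_of_le_of_ne hj hjm) i c))

lemma quasiDef_of_orthogonal {N : ℕ} (hN : 0 < N) {U : VecFun N} {h : Polynomial ℝ}
    {β : ℕ → ℕ → Mat N} {Θ : ℕ → Mat N} (hβ : ∀ m, UpperTri (β m m))
    (hΘ : ∀ m, LowerTri (Θ m) ∧ IsUnit (Θ m).det)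
    (horth : ∀ m j, j ≤ m →
      (∑ k ∈ Finset.range (m + 1), matUq U (h ^ k) (Pvec N h j) * β m k)
        = if j = m then Θ m else 0) :
    QuasiDef N hN U h := by
  set r : ℕ → Fin N := fun n => ⟨n % N, Nat.mod_lt _ hN⟩ with hr
  set B : ℕ → ℕ → ℝ := fun b n =>
    if b / N ≤ n / N then β (n / N) (b / N) (r b) (r n) else 0 with hBdef
  have hB : ∀ b n, n < b → B b n = 0 := by
    intro b n hnb
    simp only [hBdef]
    split_ifs with hle
    · have heq : b / N = n / N := le_antisymm hle (Nat.div_le_div_right hnb.le)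
      rw [heq]
      refine hβ _ _ _ ?_
      have hb := Nat.div_add_mod b N
      have hn := Nat.div_add_mod n N
      rw [heq] at hb
      simp only [hr]
      omega
    · rfl
  have hentry : ∀ n a, a / N ≤ n / N →
      ∑ b ∈ range (n + 1), momentMatrix hN U h a b * B b n =
        (if a / N = n / N then Θ (n / N) else 0) (r a) (r n) := by
    intro n a han
    rw [← horth _ _ han, sum_matUq_mul_apply hN]
    have hK : n < (n / N + 1) * N := Nat.lt_mul_of_div_lt (Nat.lt_succ_self _) hN
    rw [← sum_range_eq_of_upper hB hK]
    refine Finset.sum_congr rfl fun b hb => ?_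
    have hbn : b / N ≤ n / N :=
      Nat.lt_succ_iff.1 ((Nat.div_lt_iff_lt_mul hN).2 (Finset.mem_range.1 hb))
    simp only [hBdef, hr, if_pos hbn, Nat.div_add_mod']
  refine (quasiDef_iff hN U h).2 (leading_minors_of_exists_upper hB (fun n a han => ?_) fun n => ?_)
  · rw [hentry n a (Nat.div_le_div_right han.le)]
    split_ifs with heq
    · refine (hΘ _).1 _ _ ?_
      have ha := Nat.div_add_mod a N
      have hn := Nat.div_add_mod n N
      rw [heq] at ha
      simp only [hr]
      omega
    · rfl
  · rw [hentry n n le_rfl, if_pos rfl]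
    exact (hΘ _).1.isUnit_det_iff.1 (hΘ _).2 _

theorem statement3
    (N : ℕ) (hN : 0 < N) (h : Polynomial ℝ) (hh : h.natDegree = N) (U : VecFun N) :
    -- U is quasi-definite iff a right-orthogonal sequence of matrix polynomials
    -- `G_m(z) = ∑_{j≤m} β_j^m z^j` exists
    (QuasiDef N hN U h ↔
      ∃ (β : ℕ → ℕ → Mat N) (Θ : ℕ → Mat N),
        (∀ m, UpperTri (β m m) ∧ IsUnit (β m m).det) ∧
        (∀ m, LowerTri (Θ m) ∧ IsUnit (Θ m).det) ∧
        (∀ m j, j ≤ m →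
          (∑ k ∈ Finset.range (m + 1), matUq U (h ^ k) (Pvec N h j) * β m k)
            = if j = m then Θ m else 0)) ∧
    -- moreover: the coefficients solve the block Hankel linear system
    -- `∑_k 𝒰_{j+k} β_k^m = δ_{j,m} Θ_m`, i.e. `D_m (β_0^m; …; β_m^m) = (0; …; 0; Θ_m)`
    (∀ (β : ℕ → ℕ → Mat N) (Θ : ℕ → Mat N),
      (∀ m, UpperTri (β m m) ∧ IsUnit (β m m).det) →
      (∀ m, LowerTri (Θ m) ∧ IsUnit (Θ m).det) →
      (∀ m j, j ≤ m →
        (∑ k ∈ Finset.range (m + 1), matUq U (h ^ k) (Pvec N h j) * β m k)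
          = if j = m then Θ m else 0) →
      ∀ m j, j ≤ m →
        (∑ k ∈ Finset.range (m + 1), Umom N U h (j + k) * β m k)
          = if j = m then Θ m else 0) := by
  refine ⟨⟨exists_orthogonal_of_quasiDef hN, ?_⟩, ?_⟩
  · rintro ⟨β, Θ, hβ, hΘ, horth⟩
    exact quasiDef_of_orthogonal hN (fun m => (hβ m).1) hΘ horth
  · intro β Θ _ _ horth m j hj
    simpa only [matUq_Pvec] using horth m j hj
end
end

section
/- Let U be a vector of linear functionals and {G_m}_{m∈ℕ} a sequence of N×N real matrix polynomials with deg G_m = m, G_0 = I_{N×N}. (Forward direction) If {G_m} is right-orthogonal with respect to U, with (G_m(h(x))ᵀU)(P_m) = Θ_m nonsingular lower triangular, then there exist sequences of N×N matrices {D_m}, {E_m}, {F_m}, with each F_m nonsingular lower triangular, such that z·G_m(z) = G_{m+1}(z)·D_m + G_m(z)·E_m + G_{m−1}(z)·F_m for all m ≥ 1. (Converse direction) If there exist sequences of N×N matrices {D_m}, {E_m}, {F_m}, with each F_m nonsingular lower triangular, such that z·G_m(z) = G_{m+1}(z)·D_m + G_m(z)·E_m + G_{m−1}(z)·F_m for all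 m ≥ 0 with G_{−1} := 0 and G_0 = I_{N×N}, then there exists a vector of linear functionals U' such that {G_m} is right-orthogonal with respect to U'. -/
open Polynomial Matrix Finset

noncomputable section

/-- `N×N` real matrix polynomials. -/
abbrev MatPoly (N : ℕ) := Polynomial (Mat N)

/-- `(G(h(x))ᵀ U)(P) = ∑_k (h^k U)(P) · G_k`. -/
def GhU {N : ℕ} (U : VecFun N) (h : Polynomial ℝ) (G : MatPoly N)
    (P : Fin N → Polynomial ℝ) : Mat N :=
  G.sum fun k A => matUq U (h ^ k) P * A

/-- The value `∑ₖ μ_{j+k} pₖ` of a polynomial `p` against the moment sequence `μ` shifted by `j`. -/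
def momentPairing {R : Type*} [Ring R] (μ : ℕ → R) (j : ℕ) : R[X] →+ R :=
  AddMonoidHom.mk' (fun p => p.sum fun k a => μ (j + k) * a) fun p q =>
    Polynomial.sum_add_index p q _ (fun _ => mul_zero _) fun _ _ _ => mul_add _ _ _

section MomentPairing

variable {R : Type*} [Ring R] (μ : ℕ → R)

lemma momentPairing_apply (j : ℕ) (p : R[X]) :
    momentPairing μ j p = p.sum fun k a => μ (j + k) * a := rfl

lemma momentPairing_eq_sum (j : ℕ) {p : R[X]} {n : ℕ} (hp : p.natDegree < n) :
    momentPairing μ j p = ∑ k ∈ range n, μ (j + k) * p.coeff k :=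
  Polynomial.sum_over_range' p (fun _ => mul_zero _) n hp

lemma momentPairing_monomial (j k : ℕ) (a : R) :
    momentPairing μ j (monomial k a) = μ (j + k) * a :=
  Polynomial.sum_monomial_index a _ (mul_zero _)

lemma momentPairing_mul_C (j : ℕ) (p : R[X]) (a : R) :
    momentPairing μ j (p * C a) = momentPairing μ j p * a := by
  induction p using Polynomial.induction_on' with
  | add p q hp hq => rw [add_mul, map_add, map_add, hp, hq, add_mul]
  | monomial k b => rw [monomial_mul_C, momentPairing_monomial, momentPairing_monomial, mul_assoc]

lemma momentPairing_X_mul (j : ℕ) (p : R[X]) :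
    momentPairing μ j (X * p) = momentPairing μ (j + 1) p := by
  induction p using Polynomial.induction_on' with
  | add p q hp hq => rw [mul_add, map_add, map_add, hp, hq]
  | monomial k b =>
    rw [X_mul_monomial, momentPairing_monomial, momentPairing_monomial, add_right_comm, add_assoc]

/-- Orthogonality of `G` with invertible diagonal pairings lets one prescribe the first `n`
pairings of a polynomial of degree less than `n`. -/
lemma exists_momentPairing_eq {G : ℕ → R[X]} (hG : ∀ m, (G m).natDegree = m)
    (horth : ∀ m j, j < m → momentPairing μ j (G m) = 0)
    (hunit : ∀ m, IsUnit (momentPairing μ m (G m))) (t : ℕ → R) (n : ℕ) :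
    ∃ p : R[X], (∀ k, n ≤ k → p.coeff k = 0) ∧ ∀ j < n, momentPairing μ j p = t j := by
  induction n with
  | zero => exact ⟨0, by simp, by simp⟩
  | succ n ih =>
    obtain ⟨p, hp, hpt⟩ := ih
    obtain ⟨u, hu⟩ := hunit n
    refine ⟨p + G n * C (↑u⁻¹ * (t n - momentPairing μ n p)), fun k hk => ?_, fun j hj => ?_⟩
    · rw [coeff_add, coeff_mul_C, hp k (by omega),
        coeff_eq_zero_of_natDegree_lt (by rw [hG]; omega), zero_mul, zero_add]
    · rw [map_add, momentPairing_mul_C]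
      rcases Nat.lt_succ_iff_lt_or_eq.mp hj with hlt | rfl
      · rw [horth n j hlt, zero_mul, add_zero, hpt j hlt]
      · rw [← hu, Units.mul_inv_cancel_left, add_sub_cancel]

/-- A polynomial of degree less than `n` whose first `n` pairings vanish is zero. -/
lemma eq_zero_of_momentPairing_eq_zero [Algebra ℝ R] [Module.Finite ℝ R] {G : ℕ → R[X]}
    (hG : ∀ m, (G m).natDegree = m)
    (horth : ∀ m j, j < m → momentPairing μ j (G m) = 0)
    (hunit : ∀ m, IsUnit (momentPairing μ m (G m))) {p : R[X]} {n : ℕ}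
    (hn : p.natDegree < n) (hp : ∀ j < n, momentPairing μ j p = 0) : p = 0 := by
  let T : (Fin n → R) →ₗ[ℝ] (Fin n → R) :=
    LinearMap.pi fun j => ∑ k : Fin n, LinearMap.mulLeft ℝ (μ (j + k)) ∘ₗ LinearMap.proj k
  have hT : ∀ q : R[X], q.natDegree < n →
      T (fun k => q.coeff k) = fun j : Fin n => momentPairing μ j q := by
    intro q hq
    ext j
    simp [T, momentPairing_eq_sum μ _ hq, Finset.sum_range]
  have hsurj : Function.Surjective T := by
    intro t
    obtain ⟨q, hq, hqt⟩ := exists_momentPairing_eq μ hG horth hunit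
      (fun j => if hj : j < n then t ⟨j, hj⟩ else 0) n
    refine ⟨fun k => q.coeff k, ?_⟩
    rw [hT q (Nat.lt_of_le_pred (by omega)
      (natDegree_le_iff_coeff_eq_zero.mpr fun k hk => hq k (Nat.le_of_pred_lt hk)))]
    ext j
    simp [hqt j j.2]
  have hinj := LinearMap.injective_iff_surjective.mpr hsurj
  have hcoeff : (fun k : Fin n => p.coeff k) = 0 := by
    apply hinj
    rw [hT p hn, map_zero]
    ext j
    exact hp j j.2
  ext k
  rcases lt_or_ge k n with hk | hk
  · exact congrFun hcoeff ⟨k, hk⟩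
  · exact coeff_eq_zero_of_natDegree_lt (by omega)

/-- The moments `μ` determined by `∑_{k ≤ m} μₖ (G m)ₖ = t m`. -/
def momentsOf (G : ℕ → R[X]) (t : ℕ → R) : ℕ → R
  | m => (t m - ∑ k : Fin m, momentsOf G t k * (G m).coeff k) * Ring.inverse ((G m).coeff m)
termination_by m => m
decreasing_by exact k.2

lemma momentPairing_momentsOf {G : ℕ → R[X]} (hG : ∀ m, (G m).natDegree = m)
    (hunit : ∀ m, IsUnit ((G m).coeff m)) (t : ℕ → R) (m : ℕ) :
    momentPairing (momentsOf G t) 0 (G m) = t m := by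
  rw [momentPairing_eq_sum _ 0 (n := m + 1) (by rw [hG]; omega), Finset.sum_range_succ]
  simp only [zero_add]
  rw [momentsOf.eq_1 G t m, Ring.inverse_mul_cancel_right _ _ (hunit m), Finset.sum_range,
    add_sub_cancel]

/-- In a three-term recurrence all leading coefficients are invertible. -/
lemma isUnit_leadingCoeff_of_recurrence [IsDedekindFiniteMonoid R] {G : ℕ → R[X]}
    (hG : ∀ m, (G m).natDegree = m) (hG0 : G 0 = 1) {D E F : ℕ → R}
    (hrec : ∀ m, X * G m = G (m + 1) * C (D m) + G m * C (E m)
      + (if m = 0 then 0 else G (m - 1) * C (F m))) (m : ℕ) :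
    IsUnit ((G m).coeff m) := by
  induction m with
  | zero => simp [hG0]
  | succ m ih =>
    have hlead := congrArg (fun p => p.coeff (m + 1)) (hrec m)
    have hlast : (if m = 0 then 0 else G (m - 1) * C (F m)).coeff (m + 1) = 0 := by
      split_ifs
      · rfl
      · rw [coeff_mul_C, coeff_eq_zero_of_natDegree_lt (by rw [hG]; omega), zero_mul]
    simp only [coeff_X_mul, coeff_add, coeff_mul_C, hlast, add_zero] at hlead
    rw [(G m).coeff_eq_zero_of_natDegree_lt (n := m + 1) (by rw [hG]; omega), zero_mul,
      add_zero] at hlead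
    obtain ⟨u, hu⟩ := ih
    refine IsUnit.of_mul_eq_one (D m * ↑u⁻¹) ?_
    rw [← mul_assoc, ← hlead, ← hu, Units.mul_inv]

/-- A three-term recurrence propagates orthogonality from the zeroth pairing to all pairings. -/
lemma momentPairing_of_recurrence {G : ℕ → R[X]} {D E F : ℕ → R}
    (hrec : ∀ m, X * G m = G (m + 1) * C (D m) + G m * C (E m)
      + (if m = 0 then 0 else G (m - 1) * C (F m)))
    (hzero : ∀ m, 0 < m → momentPairing μ 0 (G m) = 0) (j : ℕ) :
    (∀ m, j < m → momentPairing μ j (G m) = 0) ∧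
      momentPairing μ (j + 1) (G (j + 1)) = momentPairing μ j (G j) * F (j + 1) := by
  have step : ∀ j m, momentPairing μ (j + 1) (G (m + 1)) =
      momentPairing μ j (G (m + 2)) * D (m + 1) + momentPairing μ j (G (m + 1)) * E (m + 1)
        + momentPairing μ j (G m) * F (m + 1) := by
    intro j m
    rw [← momentPairing_X_mul, hrec (m + 1), if_neg (Nat.succ_ne_zero m), map_add, map_add,
      momentPairing_mul_C, momentPairing_mul_C, momentPairing_mul_C, Nat.add_sub_cancel]
  have horth : ∀ m, j < m → momentPairing μ j (G m) = 0 := by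
    induction j with
    | zero => exact hzero
    | succ j ih =>
      rintro (_ | m) hm
      · omega
      · rw [step, ih _ (by omega), ih _ (by omega), ih _ (by omega)]
        simp
  refine ⟨horth, ?_⟩
  rw [step, horth _ (by omega), horth _ (by omega)]
  simp

/-- Right-orthogonality yields a three-term recurrence with explicit last coefficient. -/
lemma exists_recurrence_of_orthogonal [Algebra ℝ R] [Module.Finite ℝ R] {G : ℕ → R[X]}
    (hG : ∀ m, (G m).natDegree = m)
    (horth : ∀ m j, j < m → momentPairing μ j (G m) = 0)
    (hunit : ∀ m, IsUnit (momentPairing μ m (G m))) (m : ℕ) :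
    ∃ d e : R, X * G (m + 1) = G (m + 2) * C d + G (m + 1) * C e + G m *
      C (Ring.inverse (momentPairing μ m (G m)) * momentPairing μ (m + 1) (G (m + 1))) := by
  set f := Ring.inverse (momentPairing μ m (G m)) * momentPairing μ (m + 1) (G (m + 1)) with hf
  let e := Ring.inverse (momentPairing μ (m + 1) (G (m + 1))) *
    (momentPairing μ (m + 2) (G (m + 1)) - momentPairing μ (m + 1) (G m) * f)
  let d := Ring.inverse (momentPairing μ (m + 2) (G (m + 2))) *
    (momentPairing μ (m + 3) (G (m + 1)) - momentPairing μ (m + 2) (G m) * f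
      - momentPairing μ (m + 2) (G (m + 1)) * e)
  refine ⟨d, e, sub_eq_zero.mp ?_⟩
  refine eq_zero_of_momentPairing_eq_zero μ hG horth hunit (n := m + 3) ?_ fun j hj => ?_
  · refine Nat.lt_succ_of_le ((natDegree_le_iff_coeff_eq_zero).mpr fun k hk => ?_)
    obtain ⟨k, rfl⟩ : ∃ l, k = l + 1 := ⟨k - 1, by omega⟩
    have hcoeff : ∀ i l, i < l → (G i).coeff l = 0 := fun i l hil =>
      coeff_eq_zero_of_natDegree_lt (by rwa [hG])
    simp only [coeff_sub, coeff_add, coeff_mul_C, coeff_X_mul]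
    rw [hcoeff (m + 1) k (by omega), hcoeff (m + 2) _ (by omega), hcoeff (m + 1) (k + 1) (by omega),
      hcoeff m _ (by omega)]
    simp
  · simp only [map_sub, map_add, momentPairing_mul_C, momentPairing_X_mul]
    obtain hj | rfl | rfl | rfl : j < m ∨ j = m ∨ j = m + 1 ∨ j = m + 2 := by omega
    · rw [horth (m + 1) (j + 1) (by omega), horth (m + 2) j (by omega), horth (m + 1) j (by omega),
        horth m j hj]
      simp
    · rw [horth (j + 2) j (by omega), horth (j + 1) j (by omega), hf,
        Ring.mul_inverse_cancel_left _ _ (hunit j)]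
      simp
    · rw [horth (m + 2) (m + 1) (by omega), Ring.mul_inverse_cancel_left _ _ (hunit (m + 1))]
      simp
    · rw [Ring.mul_inverse_cancel_left _ _ (hunit (m + 2))]
      abel

end MomentPairing

lemma lowerTri_iff_blockTriangular {N : ℕ} (A : Mat N) :
    LowerTri A ↔ A.BlockTriangular OrderDual.toDual := Iff.rfl

lemma LowerTri.mul {N : ℕ} {A B : Mat N} (hA : LowerTri A) (hB : LowerTri B) :
    LowerTri (A * B) := by
  rw [lowerTri_iff_blockTriangular] at *
  exact Matrix.BlockTriangular.mul hA hB

lemma LowerTri.inv {N : ℕ} {A : Mat N} (hA : LowerTri A) (hdet : IsUnit A.det) :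
    LowerTri A⁻¹ := by
  rw [lowerTri_iff_blockTriangular] at *
  have := A.invertibleOfIsUnitDet hdet
  exact Matrix.blockTriangular_inv_of_blockTriangular hA

lemma lowerTri_one {N : ℕ} : LowerTri (1 : Mat N) := fun i j hij =>
  Matrix.one_apply_ne fun hEq => by simp [hEq] at hij

lemma GhU_eq_momentPairing {N : ℕ} (U : VecFun N) (h : ℝ[X]) (G : MatPoly N) (j : ℕ) :
    GhU U h G (Pvec N h j) = momentPairing (Umom N U h) j G := by
  rw [momentPairing_apply]
  unfold GhU
  congr 1
  ext k A : 2
  congr 1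
  ext i l
  simp only [matUq, Umom, Pvec, P0v, Matrix.of_apply]
  congr 1
  ring

/-- The polynomials `h ^ (m / N) * X ^ (m % N)`, of degree `m` when `h` has degree `N`. -/
def powModSequence {N : ℕ} (hN : 0 < N) {h : ℝ[X]} (hh : h.natDegree = N) :
    Polynomial.Sequence ℝ where
  elems' m := h ^ (m / N) * X ^ (m % N)
  degree_eq' m := by
    have hdeg : h.degree = N := (degree_eq_iff_natDegree_eq_of_pos hN).mpr hh
    rw [degree_mul, degree_pow, degree_X_pow, hdeg, nsmul_eq_mul]
    exact_mod_cast Nat.div_add_mod' m N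

lemma exists_vecFun_umom_eq {N : ℕ} (hN : 0 < N) {h : ℝ[X]} (hh : h.natDegree = N)
    (μ : ℕ → Mat N) : ∃ U : VecFun N, Umom N U h = μ := by
  let S := powModSequence hN hh
  have hS : ∀ m, IsUnit (S m).leadingCoeff := fun m =>
    (leadingCoeff_ne_zero.mpr (S.ne_zero m)).isUnit
  refine ⟨fun j => (S.basis hS).constr ℝ fun m => μ (m / N) ⟨m % N, Nat.mod_lt _ hN⟩ j, ?_⟩
  ext n i j
  have hdiv : (N * n + i) / N = n := by
    rw [Nat.mul_add_div hN, Nat.div_eq_of_lt i.2, add_zero]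
  have hmod : (N * n + i) % N = i := by rw [Nat.mul_add_mod, Nat.mod_eq_of_lt i.2]
  have hbasis : h ^ n * X ^ (i : ℕ) = S.basis hS (N * n + i) := by
    rw [Polynomial.Sequence.basis_eq_self]
    change _ = h ^ ((N * n + i) / N) * X ^ ((N * n + i) % N)
    rw [hdiv, hmod]
  simp only [Umom, matUq, P0v, Matrix.of_apply]
  rw [hbasis, Module.Basis.constr_basis]
  simp only [hdiv, hmod]

theorem statement4
    (N : ℕ) (hN : 0 < N) (h : Polynomial ℝ) (hh : h.natDegree = N) (U : VecFun N)
    (G : ℕ → MatPoly N) (hGdeg : ∀ m, (G m).natDegree = m) (hG0 : G 0 = 1) :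
    -- forward direction
    (∀ Θ : ℕ → Mat N,
      (∀ m, LowerTri (Θ m) ∧ IsUnit (Θ m).det) →
      (∀ m j, j ≤ m → GhU U h (G m) (Pvec N h j) = if j = m then Θ m else 0) →
      ∃ D E F : ℕ → Mat N, (∀ m, LowerTri (F m) ∧ IsUnit (F m).det) ∧
        ∀ m, 1 ≤ m → X * G m =
          G (m + 1) * Polynomial.C (D m) + G m * Polynomial.C (E m)
            + G (m - 1) * Polynomial.C (F m)) ∧
    -- converse direction
    (∀ D E F : ℕ → Mat N,
      (∀ m, LowerTri (F m) ∧ IsUnit (F m).det) →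
      (∀ m : ℕ, X * G m =
          G (m + 1) * Polynomial.C (D m) + G m * Polynomial.C (E m)
            + (if m = 0 then 0 else G (m - 1) * Polynomial.C (F m))) →
      ∃ (U' : VecFun N) (Θ : ℕ → Mat N),
        (∀ m, LowerTri (Θ m) ∧ IsUnit (Θ m).det) ∧
        (∀ m j, j ≤ m → GhU U' h (G m) (Pvec N h j) = if j = m then Θ m else 0)) := by
  constructor
  · intro Θ hΘ hU
    simp only [GhU_eq_momentPairing] at hU
    have horth : ∀ m j, j < m → momentPairing (Umom N U h) j (G m) = 0 := fun m j hj => by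
      rw [hU m j hj.le, if_neg hj.ne]
    have hdiag : ∀ m, momentPairing (Umom N U h) m (G m) = Θ m := fun m => by
      rw [hU m m le_rfl, if_pos rfl]
    have hunit : ∀ m, IsUnit (momentPairing (Umom N U h) m (G m)) := fun m => by
      rw [hdiag, Matrix.isUnit_iff_isUnit_det]
      exact (hΘ m).2
    choose d e hrec using exists_recurrence_of_orthogonal (Umom N U h) hGdeg horth hunit
    refine ⟨fun m => d (m - 1), fun m => e (m - 1), fun m => (Θ (m - 1))⁻¹ * Θ m,
      fun m => ⟨((hΘ _).1.inv (hΘ _).2).mul (hΘ m).1, ?_⟩, ?_⟩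
    · rw [Matrix.det_mul]
      exact (Matrix.isUnit_nonsing_inv_det _ (hΘ _).2).mul (hΘ m).2
    · rintro (_ | m) hm
      · omega
      · simpa only [hdiag, ← Matrix.nonsing_inv_eq_ringInverse, Nat.add_sub_cancel] using hrec m
  · intro D E F hF hrec
    have hlead := isUnit_leadingCoeff_of_recurrence hGdeg hG0 hrec
    obtain ⟨U', hU'⟩ := exists_vecFun_umom_eq hN hh
      (momentsOf G fun m => if m = 0 then 1 else 0)
    have hpair : ∀ m, momentPairing (Umom N U' h) 0 (G m) = if m = 0 then 1 else 0 := by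
      rw [hU']
      exact momentPairing_momentsOf hGdeg hlead _
    have horth := momentPairing_of_recurrence (Umom N U' h) hrec fun m hm => by
      rw [hpair, if_neg hm.ne']
    refine ⟨U', fun m => momentPairing (Umom N U' h) m (G m), fun m => ?_, fun m j hj => ?_⟩
    · induction m with
      | zero => simpa [hpair] using lowerTri_one
      | succ m ih =>
        simp only [(horth m).2]
        rw [Matrix.det_mul]
        exact ⟨ih.1.mul (hF _).1, ih.2.mul (hF _).2⟩
    · rw [GhU_eq_momentPairing]
      split_ifs with hjm
      · rw [hjm]
      · exact (horth j).1 m (lt_of_le_of_ne hj hjm)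
end
end
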